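/- Let T_s : ℝ → ℝ be continuous and bounded. Define T(x,t) = (x/(2√π)) ∫₀ᵗ T_s(τ) · (t−τ)^(−3/2) · exp(−x²/(4(t−τ))) dτ for x > 0, t > 0. Then for every x > 0 and t > 0, ∂T/∂x (x,t) = (1/(2√π)) ∫₀ᵗ T_s(τ) · (t−τ)^(−3/2) · exp(−x²/(4(t−τ))) · (1 − x²/(2(t−τ))) dτ. -/

import Mathlib

open Real Filter Topology

/-- The representation formula (30) of the paper for the solution of the
half-line heat problem: `T(x,t) = (x/(2√π)) ∫₀ᵗ T_s(τ)(t−τ)^(−3/2) exp(−x²/(4(t−τ))) dτ`. -/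
noncomputable def heatT (Ts : ℝ → ℝ) (x t : ℝ) : ℝ :=
  (x / (2 * Real.sqrt π)) *
    ∫ τ in (0:ℝ)..t, Ts τ * (t - τ) ^ (-(3 / 2) : ℝ) * Real.exp (-x ^ 2 / (4 * (t - τ)))

/-!
Away from `y = 0` the Gaussian factor `exp (-y² / (4 s))` beats every negative power of `s`, so
the `y`-derivative of the kernel `y s^(-3/2) exp (-y² / (4 s))` is bounded uniformly in `s ≥ 0` and
`|y| ≥ b > 0`. Dominated convergence then allows differentiation under the integral against any
integrable boundary datum.
-/

open MeasureTheory

theorem rpow_neg_mul_exp_neg_div_le {a q s : ℝ} (ha : 0 < a) (hq : 0 < q) (hs : 0 ≤ s) :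
    s ^ (-q) * exp (-(a / s)) ≤ (q / a) ^ q := by
  rcases hs.eq_or_lt with rfl | hs
  · rw [zero_rpow (neg_ne_zero.mpr hq.ne'), zero_mul]
    positivity
  -- `v ≤ exp v` at `v = a / (q s)`, raised to the power `q`.
  have exp_dominates : (a / (q * s)) ^ q ≤ exp (a / s) :=
    calc (a / (q * s)) ^ q ≤ exp (a / (q * s)) ^ q := by
          gcongr
          linarith [add_one_le_exp (a / (q * s))]
      _ = exp (a / s) := by
          rw [← exp_mul]
          congr 1
          field_simp
  calc s ^ (-q) * exp (-(a / s))
      = (q / a) ^ q * ((a / (q * s)) ^ q * exp (-(a / s))) := by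
        rw [← mul_assoc, ← mul_rpow (by positivity) (by positivity), rpow_neg hs.le,
          ← inv_rpow hs.le]
        congr 2
        field_simp
    _ ≤ (q / a) ^ q * (exp (a / s) * exp (-(a / s))) := by gcongr
    _ = (q / a) ^ q := by rw [← exp_add, add_neg_cancel, exp_zero, mul_one]

theorem exp_neg_mul_abs_one_sub_two_mul_le {v : ℝ} (hv : 0 ≤ v) :
    exp (-v) * |1 - 2 * v| ≤ 4 * exp (-(v / 2)) := by
  have linear_le_exp : |1 - 2 * v| ≤ 4 * exp (v / 2) := by
    rw [abs_le]
    constructor <;> linarith [add_one_le_exp (v / 2)]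
  calc exp (-v) * |1 - 2 * v| ≤ exp (-v) * (4 * exp (v / 2)) := by gcongr
    _ = 4 * exp (-(v / 2)) := by
      rw [mul_left_comm, ← exp_add]
      ring_nf

/-- The boundary (Poisson) kernel of the heat equation on the half-line at depth `y` and elapsed
time `s`, without the factor `1 / (2 √π)`. Its value at `s = 0` is `0`, because
`0 ^ (-(3 / 2)) = 0`. -/
noncomputable def boundaryHeatKernel (y s : ℝ) : ℝ :=
  y * (s ^ (-(3 / 2) : ℝ) * exp (-y ^ 2 / (4 * s)))

/-- The derivative of `boundaryHeatKernel` with respect to the depth `y`; likewise `0` at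
`s = 0`. -/
noncomputable def boundaryHeatKernelDeriv (y s : ℝ) : ℝ :=
  s ^ (-(3 / 2) : ℝ) * exp (-y ^ 2 / (4 * s)) * (1 - y ^ 2 / (2 * s))

theorem hasDerivAt_boundaryHeatKernel (y s : ℝ) :
    HasDerivAt (fun z => boundaryHeatKernel z s) (boundaryHeatKernelDeriv y s) y := by
  have exponent_deriv : HasDerivAt (fun z : ℝ => -z ^ 2 / (4 * s)) (-(2 * y) / (4 * s)) y := by
    simpa using ((hasDerivAt_pow 2 y).neg).div_const (4 * s)
  refine ((hasDerivAt_id y).mul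
    (exponent_deriv.exp.const_mul (s ^ (-(3 / 2) : ℝ)))).congr_deriv ?_
  rw [boundaryHeatKernelDeriv, id]
  ring

@[fun_prop]
theorem measurable_boundaryHeatKernel (y : ℝ) : Measurable (boundaryHeatKernel y) := by
  unfold boundaryHeatKernel
  fun_prop

@[fun_prop]
theorem measurable_boundaryHeatKernelDeriv (y : ℝ) : Measurable (boundaryHeatKernelDeriv y) := by
  unfold boundaryHeatKernelDeriv
  fun_prop

theorem abs_boundaryHeatKernel_le {y s : ℝ} (hy : y ≠ 0) (hs : 0 ≤ s) :
    |boundaryHeatKernel y s| ≤ |y| * (6 / y ^ 2) ^ (3 / 2 : ℝ) := by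
  have hy2 : 0 < y ^ 2 / 4 := by positivity
  calc |boundaryHeatKernel y s|
      = |y| * (s ^ (-(3 / 2) : ℝ) * exp (-(y ^ 2 / 4 / s))) := by
        rw [boundaryHeatKernel, abs_mul, abs_mul, abs_exp, abs_of_nonneg (rpow_nonneg hs _),
          neg_div, div_div]
    _ ≤ |y| * (3 / 2 / (y ^ 2 / 4)) ^ (3 / 2 : ℝ) := by
        gcongr
        exact rpow_neg_mul_exp_neg_div_le hy2 (by norm_num) hs
    _ = |y| * (6 / y ^ 2) ^ (3 / 2 : ℝ) := by
        congr 2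
        field_simp
        norm_num

theorem abs_boundaryHeatKernelDeriv_le {b y s : ℝ} (hb : 0 < b) (hby : b ≤ |y|) (hs : 0 ≤ s) :
    |boundaryHeatKernelDeriv y s| ≤ 4 * (12 / b ^ 2) ^ (3 / 2 : ℝ) := by
  have hsq : b ^ 2 ≤ y ^ 2 := by
    rw [← sq_abs y]
    gcongr
  calc |boundaryHeatKernelDeriv y s|
      = s ^ (-(3 / 2) : ℝ) *
          (exp (-(y ^ 2 / (4 * s))) * |1 - 2 * (y ^ 2 / (4 * s))|) := by
        rw [boundaryHeatKernelDeriv, abs_mul, abs_of_nonneg (by positivity), neg_div, mul_assoc]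
        congr 4
        ring
    _ ≤ s ^ (-(3 / 2) : ℝ) * (4 * exp (-(y ^ 2 / (4 * s) / 2))) := by
        gcongr ?_ * ?_
        exact exp_neg_mul_abs_one_sub_two_mul_le (by positivity)
    _ = 4 * (s ^ (-(3 / 2) : ℝ) * exp (-(y ^ 2 / 8 / s))) := by ring_nf
    _ ≤ 4 * (s ^ (-(3 / 2) : ℝ) * exp (-(b ^ 2 / 8 / s))) := by gcongr
    _ ≤ 4 * (3 / 2 / (b ^ 2 / 8)) ^ (3 / 2 : ℝ) := by
        gcongr
        exact rpow_neg_mul_exp_neg_div_le (by positivity) (by norm_num) hs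
    _ = 4 * (12 / b ^ 2) ^ (3 / 2 : ℝ) := by
        congr 2
        field_simp
        norm_num

section BoundaryIntegral

variable {μ : Measure ℝ} {f : ℝ → ℝ} {a t x : ℝ}

theorem intervalIntegrable_mul_boundaryHeatKernel (hf : IntervalIntegrable f μ a t) (hat : a ≤ t)
    (hx : x ≠ 0) :
    IntervalIntegrable (fun τ => f τ * boundaryHeatKernel x (t - τ)) μ a t := by
  rw [intervalIntegrable_iff_integrableOn_Ioc_of_le hat] at hf ⊢
  refine hf.mul_bdd (c := |x| * (6 / x ^ 2) ^ (3 / 2 : ℝ))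
    (Measurable.aestronglyMeasurable (by fun_prop)) ?_
  filter_upwards [ae_restrict_mem measurableSet_Ioc] with τ hτ
  exact abs_boundaryHeatKernel_le hx (sub_nonneg.mpr hτ.2)

theorem hasDerivAt_integral_mul_boundaryHeatKernel (hf : IntervalIntegrable f μ a t) (hat : a ≤ t)
    (hx : x ≠ 0) :
    HasDerivAt (fun y => ∫ τ in a..t, f τ * boundaryHeatKernel y (t - τ) ∂μ)
      (∫ τ in a..t, f τ * boundaryHeatKernelDeriv x (t - τ) ∂μ) x := by
  have half_abs_pos : 0 < |x| / 2 := by positivity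
  have nhds_x : {y : ℝ | |x| / 2 < |y|} ∈ 𝓝 x :=
    (isOpen_lt continuous_const continuous_abs).mem_nhds (half_lt_self (abs_pos.mpr hx))
  have hf_meas := hf.aestronglyMeasurable_restrict_uIoc
  refine (intervalIntegral.hasDerivAt_integral_of_dominated_loc_of_deriv_le
    (bound := fun τ => |f τ| * (4 * (12 / (|x| / 2) ^ 2) ^ (3 / 2 : ℝ))) nhds_x
    (.of_forall fun y => hf_meas.mul (Measurable.aestronglyMeasurable (by fun_prop)))
    (intervalIntegrable_mul_boundaryHeatKernel hf hat hx)
    (hf_meas.mul (Measurable.aestronglyMeasurable (by fun_prop)))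
    (.of_forall fun τ hτ y hy => ?_)
    (hf.abs.mul_const _)
    (.of_forall fun τ _ y _ => (hasDerivAt_boundaryHeatKernel y (t - τ)).const_mul (f τ))).2
  rw [Set.uIoc_of_le hat] at hτ
  rw [norm_mul, norm_eq_abs, norm_eq_abs]
  gcongr
  exact abs_boundaryHeatKernelDeriv_le half_abs_pos (le_of_lt hy) (sub_nonneg.mpr hτ.2)

end BoundaryIntegral

theorem heatT_eq_integral_boundaryHeatKernel (Ts : ℝ → ℝ) (x t : ℝ) :
    heatT Ts x t =
      (1 / (2 * √π)) * ∫ τ in (0:ℝ)..t, Ts τ * boundaryHeatKernel x (t - τ) := by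
  simp only [boundaryHeatKernel, mul_left_comm _ x, intervalIntegral.integral_const_mul]
  rw [heatT, ← mul_assoc, mul_one_div]
  simp only [mul_assoc]

theorem heatT_deriv_x_general {Ts : ℝ → ℝ} {x t : ℝ} (hTs : IntervalIntegrable Ts volume 0 t)
    (hx : x ≠ 0) (ht : 0 ≤ t) :
    HasDerivAt (fun y => heatT Ts y t)
      ((1 / (2 * √π)) *
        ∫ τ in (0:ℝ)..t, Ts τ * (t - τ) ^ (-(3 / 2) : ℝ)
          * exp (-x ^ 2 / (4 * (t - τ))) * (1 - x ^ 2 / (2 * (t - τ)))) x := by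
  have h := (hasDerivAt_integral_mul_boundaryHeatKernel hTs ht hx).const_mul (1 / (2 * √π))
  simpa only [heatT_eq_integral_boundaryHeatKernel, boundaryHeatKernelDeriv, ← mul_assoc] using h

/-- Differentiation under the integral sign (formula just before equation (32) of the paper):
`∂T/∂x (x,t) = (1/(2√π)) ∫₀ᵗ T_s(τ)(t−τ)^(−3/2) exp(−x²/(4(t−τ)))(1 − x²/(2(t−τ))) dτ`
for `x > 0`, `t > 0`. -/
theorem heatT_deriv_x
    (Ts : ℝ → ℝ) (hc : Continuous Ts) (hb : ∃ M, ∀ τ, |Ts τ| ≤ M) :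
    ∀ x t : ℝ, 0 < x → 0 < t →
      deriv (fun y => heatT Ts y t) x
        = (1 / (2 * Real.sqrt π)) *
            ∫ τ in (0:ℝ)..t, Ts τ * (t - τ) ^ (-(3 / 2) : ℝ)
              * Real.exp (-x ^ 2 / (4 * (t - τ))) * (1 - x ^ 2 / (2 * (t - τ))) :=
  fun _ t hx ht => (heatT_deriv_x_general (hc.intervalIntegrable 0 t) hx.ne' ht.le).deriv
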